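/- Let n ≥ 1, let μ be a Borel probability measure on ℝ^{n×n} with bounded support, and let p ≥ 1 be an integer. Suppose the stochastic switched system Σ_μ is exponentially stable in pth mean (equivalently, ρ_{p,μ} < 1). Then for every γ ∈ (ρ_{p,μ}, 1) there exists a stochastic Lyapunov function for μ of degree p with growth rate γ; indeed, for a suitable positive integer k₀, the function V(x) := Σ_{k=0}^{k₀−1} E[‖A_k ⋯ A₁ x‖^p] / γ^{pk} (with the empty product equal to the identity matrix) is such a function, where A₁, A₂, … are i.i.d. with law μ. -/

import Mathlib

open MeasureTheory Filter Topology
open scoped ENNReal RealInnerProductSpace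

noncomputable section

/-- The space of real `n × n` matrices. -/
abbrev Mat (n : ℕ) := Matrix (Fin n) (Fin n) ℝ

/-- Euclidean space `ℝⁿ`. -/
abbrev EucSp (n : ℕ) := EuclideanSpace ℝ (Fin n)

/-- The (Borel = product) measurable structure on `n × n` real matrices. -/
instance matMeasurableSpace (n : ℕ) : MeasurableSpace (Mat n) :=
  inferInstanceAs (MeasurableSpace (Fin n → Fin n → ℝ))

/-- Lebesgue measure on the space of `n × n` real matrices `≅ ℝ^{n²}`. -/
def matLebesgue (n : ℕ) : Measure (Mat n) :=
  (inferInstance : MeasureSpace (Fin n → Fin n → ℝ)).volume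

/-- The operator norm (maximal singular value) of a real square matrix, induced by the
Euclidean norm. -/
def opNorm {m : ℕ} (A : Matrix (Fin m) (Fin m) ℝ) : ℝ :=
  ‖LinearMap.toContinuousLinearMap (Matrix.toEuclideanLin A)‖

/-- The product `A_k ⋯ A_1` of the matrices `f 0 = A_1, …, f (k-1) = A_k` (decreasing order of
indices). -/
def prodRev {m k : ℕ} (f : Fin k → Matrix (Fin m) (Fin m) ℝ) : Matrix (Fin m) (Fin m) ℝ :=
  ((List.ofFn f).reverse).prod

/-- The joint spectral radius of a set of matrices:
`ρ̂(M) = limsup_{k→∞} sup_{A₁,…,A_k ∈ M} ‖A_k ⋯ A₁‖^(1/k)`. -/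
def jsr {m : ℕ} (M : Set (Matrix (Fin m) (Fin m) ℝ)) : ℝ :=
  limsup (fun k : ℕ =>
    sSup {x : ℝ | ∃ f : Fin k → Matrix (Fin m) (Fin m) ℝ,
      (∀ i, f i ∈ M) ∧ x = opNorm (prodRev f)} ^ ((1 : ℝ) / k)) atTop

/-- `E[‖A_k ⋯ A₁‖^p]` where `A₁, …, A_k` are i.i.d. with law `μ`. -/
def kExpNorm {m : ℕ} (μ : Measure (Mat m)) (p k : ℕ) : ℝ :=
  ∫ f : Fin k → Mat m, opNorm (prodRev f) ^ p ∂(Measure.pi fun _ => μ)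

/-- The `L^p`-norm joint spectral radius (`p`-radius) of a probability distribution `μ`:
`ρ_{p,μ} = lim_{k→∞} (E[‖A_k ⋯ A₁‖^p])^{1/(pk)}`; since this limit exists for distributions
with bounded support, it coincides with the `limsup` used here. -/
def pRadius {m : ℕ} (μ : Measure (Mat m)) (p : ℕ) : ℝ :=
  limsup (fun k : ℕ => kExpNorm μ p k ^ (1 / (p * k : ℝ))) atTop

/-- The (topological) support of a measure on matrices. -/
def msupport {m : ℕ} (μ : Measure (Mat m)) : Set (Mat m) :=
  {A | ∀ ε : ℝ, 0 < ε → μ {B | opNorm (B - A) < ε} ≠ 0}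

/-- `μ` has bounded support. -/
def HasBoundedSupport {m : ℕ} (μ : Measure (Mat m)) : Prop :=
  ∃ C : ℝ, ∀ A ∈ msupport μ, opNorm A ≤ C

/-- A proper cone of `ℝⁿ`: a closed convex pointed cone with nonempty interior. -/
structure IsProperCone {m : ℕ} (K : Set (EucSp m)) : Prop where
  isClosed : IsClosed K
  convex : Convex ℝ K
  smul_mem : ∀ c : ℝ, 0 ≤ c → ∀ x ∈ K, c • x ∈ K
  pointed : ∀ x ∈ K, -x ∈ K → x = 0
  solid : (interior K).Nonempty

/-- A matrix `A` leaves a cone `K` invariant: `A K ⊆ K`. -/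
def LeavesInv {m : ℕ} (A : Matrix (Fin m) (Fin m) ℝ) (K : Set (EucSp m)) : Prop :=
  ∀ x ∈ K, Matrix.toEuclideanLin A x ∈ K

/-- A set of matrices leaves a cone invariant if each of its members does. -/
def SetLeavesInv {m : ℕ} (S : Set (Matrix (Fin m) (Fin m) ℝ)) (K : Set (EucSp m)) : Prop :=
  ∀ A ∈ S, LeavesInv A K

/-- `π(K)`: the set of matrices leaving the cone `K` invariant. -/
def piCone {m : ℕ} (K : Set (EucSp m)) : Set (Mat m) := {A | LeavesInv A K}

/-- Distance (valued in `ℝ≥0∞`, with `d(A, ∅) = ∞`) from a matrix to a set of matrices, in the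
operator norm. -/
def edistSet {m : ℕ} (A : Mat m) (S : Set (Mat m)) : ℝ≥0∞ :=
  ⨅ B ∈ S, ENNReal.ofReal (opNorm (A - B))

/-- Hausdorff distance between two sets of matrices (operator norm, valued in `ℝ≥0∞`). -/
def hausdorffDistE {m : ℕ} (S T : Set (Mat m)) : ℝ≥0∞ :=
  max (⨆ A ∈ S, edistSet A T) (⨆ B ∈ T, edistSet B S)

/-- `S_M = {A : A − M leaves K invariant}`, i.e. `{A : A ≥^K M}`. -/
def matSSet {m : ℕ} (K : Set (EucSp m)) (M : Mat m) : Set (Mat m) :=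
  {A | LeavesInv (A - M) K}

/-- `π_r = {M ∈ π(K) : d(M, ∂π(K)) ≥ r}`. -/
def piConeR {m : ℕ} (K : Set (EucSp m)) (r : ℝ) : Set (Mat m) :=
  {M | M ∈ piCone K ∧ ENNReal.ofReal r ≤ edistSet M (frontier (piCone K))}

/-- `M_r = (π_r ∩ supp μ_c) ∪ supp μ_s`. -/
def MrSet {m : ℕ} (K : Set (EucSp m)) (μc μs : Measure (Mat m)) (r : ℝ) : Set (Mat m) :=
  (piConeR K r ∩ msupport μc) ∪ msupport μs

/-- The measure `ν` is zero or a finite linear combination (with positive coefficients) of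
Dirac measures. -/
def IsFiniteDiracComb {m : ℕ} (ν : Measure (Mat m)) : Prop :=
  ν = 0 ∨ ∃ (N : ℕ) (w : Fin N → ℝ) (Ms : Fin N → Mat m),
    (∀ i, 0 < w i) ∧ ν = ∑ i, ENNReal.ofReal (w i) • Measure.dirac (Ms i)

/-- The `p`-th Kronecker power of a square matrix (with `A^{⊗0} = 1`, `A^{⊗(p+1)} = A^{⊗p} ⊗ A`). -/
def kronPow {m : ℕ} (A : Matrix (Fin m) (Fin m) ℝ) :
    (p : ℕ) → Matrix (Fin (m ^ p)) (Fin (m ^ p)) ℝ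
  | 0 => 1
  | p + 1 =>
    Matrix.reindex (finProdFinEquiv.trans (finCongr (pow_succ m p).symm))
      (finProdFinEquiv.trans (finCongr (pow_succ m p).symm))
      (Matrix.kroneckerMap (· * ·) (kronPow A p) A)

/-- The `q`-th Kronecker power of a vector. -/
def vecKronPow {m : ℕ} (x : EucSp m) : (q : ℕ) → EucSp (m ^ q)
  | 0 => WithLp.toLp 2 fun _ => 1
  | q + 1 => WithLp.toLp 2 fun i =>
      vecKronPow x q (finProdFinEquiv.symm (finCongr (pow_succ m q) i)).1 *
        x (finProdFinEquiv.symm (finCongr (pow_succ m q) i)).2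

/-- The spectral radius of a real square matrix: the largest modulus of a complex eigenvalue. -/
def specRad {m : ℕ} (A : Matrix (Fin m) (Fin m) ℝ) : ℝ :=
  sSup ((fun z : ℂ => ‖z‖) '' spectrum ℂ (A.map Complex.ofReal))

/-- The entrywise expectation `E[A^{⊗p}]` of the `p`-th Kronecker power under `μ`. -/
def kronExp {m : ℕ} (μ : Measure (Mat m)) (p : ℕ) :
    Matrix (Fin (m ^ p)) (Fin (m ^ p)) ℝ :=
  Matrix.of fun i j => ∫ A, kronPow A p i j ∂μ

/-- `V` is a stochastic Lyapunov function for `μ` of degree `p` with growth rate `γ`. -/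
def IsStochLyap {m : ℕ} (μ : Measure (Mat m)) (p : ℕ) (γ : ℝ) (V : EucSp m → ℝ) : Prop :=
  (∃ C₁ : ℝ, 0 < C₁ ∧ ∃ C₂ : ℝ, 0 < C₂ ∧
    ∀ x : EucSp m, C₁ * ‖x‖ ^ p ≤ V x ∧ V x ≤ C₂ * ‖x‖ ^ p) ∧
  ∀ x : EucSp m, (∫ A, V (Matrix.toEuclideanLin A x) ∂μ) ≤ γ ^ p * V x

/-- `ν` is a norm on `ℝ^m`. -/
def IsNormFn {m : ℕ} (ν : EucSp m → ℝ) : Prop :=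
  (∀ x, 0 ≤ ν x) ∧ (∀ x, ν x = 0 ↔ x = 0) ∧
  (∀ (a : ℝ) (x : EucSp m), ν (a • x) = |a| * ν x) ∧
  (∀ x y : EucSp m, ν (x + y) ≤ ν x + ν y)

/-- `ν` is cone absolute with respect to `K`:
`ν x = inf {ν (v + w) : v, w ∈ K, x = v − w}`. -/
def IsConeAbsolute {m : ℕ} (K : Set (EucSp m)) (ν : EucSp m → ℝ) : Prop :=
  ∀ x : EucSp m, ν x = sInf {r : ℝ | ∃ v ∈ K, ∃ w ∈ K, x = v - w ∧ r = ν (v + w)}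

/-- The dual cone `K* = {f : fᵀx ≥ 0 for all x ∈ K}`. -/
def dualConeSet {m : ℕ} (K : Set (EucSp m)) : Set (EucSp m) :=
  {f | ∀ x ∈ K, 0 ≤ ⟪f, x⟫}

/-- `ν` is cone linear with respect to `K`: `ν = ⟪f, ·⟫` on `K` for some `f ∈ K*`. -/
def IsConeLinear {m : ℕ} (K : Set (EucSp m)) (ν : EucSp m → ℝ) : Prop :=
  ∃ f ∈ dualConeSet K, ∀ x ∈ K, ν x = ⟪f, x⟫

/-- The matrix norm induced by a norm `ν` on `ℝ^m`. -/
def inducedNormFn {m : ℕ} (ν : EucSp m → ℝ) (A : Matrix (Fin m) (Fin m) ℝ) : ℝ :=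
  sSup {c : ℝ | ∃ x : EucSp m, x ≠ 0 ∧ c = ν (Matrix.toEuclideanLin A x) / ν x}

/-!
Write `u k x = E[‖A_k ⋯ A₁ x‖^p] / γ^{pk}`, so that `V` is the sum of `u 0, …, u (k₀ - 1)`.
Conditioning on `A₁` gives `E[u k (A x)] = γ^p u (k + 1) x`, and therefore the sum telescopes:
`E[V (A x)] = γ^p (V x + u k₀ x - ‖x‖^p)`. As `γ` exceeds the `p`-radius, the root test provides
a `k₀` with `E[‖A_{k₀} ⋯ A₁‖^p] ≤ γ^{p k₀}`, which makes the correction `u k₀ x - ‖x‖^p`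
nonpositive.
-/

section FinCons

variable {k : ℕ} {α : Fin (k + 1) → Type*} [∀ i, MeasurableSpace (α i)]

theorem measurePreserving_fin_cons (μ : ∀ i, Measure (α i)) [∀ i, SigmaFinite (μ i)] :
    MeasurePreserving (fun z : α 0 × (∀ i : Fin k, α i.succ) => (Fin.cons z.1 z.2 : ∀ i, α i))
      ((μ 0).prod (Measure.pi fun i => μ i.succ)) (Measure.pi μ) := by
  have hcons : (fun z : α 0 × (∀ i : Fin k, α i.succ) => (Fin.cons z.1 z.2 : ∀ i, α i)) =
      (MeasurableEquiv.piFinSuccAbove α 0).symm :=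
    funext fun z => (Fin.insertNth_zero z.1 z.2).symm
  rw [hcons]
  exact (measurePreserving_piFinSuccAbove μ 0).symm

variable {E : Type*} [NormedAddCommGroup E] {μ : ∀ i, Measure (α i)} [∀ i, SigmaFinite (μ i)]
  {F : (∀ i, α i) → E}

theorem integrable_comp_fin_cons (hF : Integrable F (Measure.pi μ)) :
    Integrable (fun z : α 0 × (∀ i : Fin k, α i.succ) => F (Fin.cons z.1 z.2))
      ((μ 0).prod (Measure.pi fun i => μ i.succ)) :=
  (measurePreserving_fin_cons μ).integrable_comp_of_integrable hF

variable [NormedSpace ℝ E]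

theorem integrable_integral_fin_cons (hF : Integrable F (Measure.pi μ)) :
    Integrable (fun a => ∫ f, F (Fin.cons a f) ∂(Measure.pi fun i : Fin k => μ i.succ)) (μ 0) :=
  (integrable_comp_fin_cons hF).integral_prod_left

theorem integral_integral_fin_cons (hF : Integrable F (Measure.pi μ)) :
    ∫ a, ∫ f, F (Fin.cons a f) ∂(Measure.pi fun i : Fin k => μ i.succ) ∂(μ 0) =
      ∫ g, F g ∂(Measure.pi μ) := by
  have hcons := measurePreserving_fin_cons μ
  rw [← integral_prod _ (integrable_comp_fin_cons hF), ← hcons.map_eq,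
    integral_map hcons.aemeasurable (hcons.map_eq ▸ hF.aestronglyMeasurable)]

end FinCons

instance matBorelSpace (n : ℕ) : BorelSpace (Mat n) :=
  inferInstanceAs (BorelSpace (Fin n → Fin n → ℝ))

instance matSecondCountableTopology (n : ℕ) : SecondCountableTopology (Mat n) :=
  inferInstanceAs (SecondCountableTopology (Fin n → Fin n → ℝ))

section OpNorm

variable {m k : ℕ}

theorem opNorm_nonneg (A : Mat m) : 0 ≤ opNorm A :=
  norm_nonneg _

theorem norm_toEuclideanLin_le (A : Mat m) (x : EucSp m) :
    ‖Matrix.toEuclideanLin A x‖ ≤ opNorm A * ‖x‖ :=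
  (LinearMap.toContinuousLinearMap (Matrix.toEuclideanLin A)).le_opNorm x

theorem opNorm_mul_le (A B : Mat m) : opNorm (A * B) ≤ opNorm A * opNorm B :=
  Matrix.l2_opNorm_mul A B

theorem opNorm_one_le : opNorm (1 : Mat m) ≤ 1 := by
  rw [opNorm, Matrix.toLpLin_one]
  exact ContinuousLinearMap.norm_id_le

open scoped Matrix.Norms.L2Operator in
theorem continuous_opNorm : Continuous (opNorm : Mat m → ℝ) :=
  continuous_norm

theorem continuous_toEuclideanLin_apply (x : EucSp m) :
    Continuous fun A : Mat m => Matrix.toEuclideanLin A x :=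
  (LinearMap.applyₗ x ∘ₗ Matrix.toEuclideanLin.toLinearMap).continuous_of_finiteDimensional

theorem prodRev_zero (f : Fin 0 → Mat m) : prodRev f = 1 := by
  simp [prodRev]

theorem prodRev_cons (A : Mat m) (f : Fin k → Mat m) :
    prodRev (Fin.cons A f : Fin (k + 1) → Mat m) = prodRev f * A := by
  simp [prodRev, List.ofFn_succ]

theorem continuous_prodRev : Continuous (prodRev : (Fin k → Mat m) → Mat m) := by
  unfold prodRev
  simp only [List.ofFn_eq_map, ← List.map_reverse]
  exact continuous_list_prod _ fun i _ => continuous_apply i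

theorem opNorm_prodRev_le (f : Fin k → Mat m) : opNorm (prodRev f) ≤ ∏ i, opNorm (f i) := by
  induction f using Fin.consInduction with
  | elim0 => simpa [prodRev_zero] using opNorm_one_le
  | cons A f ih =>
    calc opNorm (prodRev (Fin.cons A f : Fin (_ + 1) → Mat m))
        ≤ opNorm (prodRev f) * opNorm A := by
          rw [prodRev_cons]
          exact opNorm_mul_le _ _
      _ ≤ (∏ i, opNorm (f i)) * opNorm A := mul_le_mul_of_nonneg_right ih (opNorm_nonneg A)
      _ = ∏ i, opNorm ((Fin.cons A f : Fin (_ + 1) → Mat m) i) := by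
          simp [Fin.prod_univ_succ, mul_comm]

theorem norm_toEuclideanLin_pow_le (p : ℕ) (A : Mat m) (x : EucSp m) :
    ‖Matrix.toEuclideanLin A x‖ ^ p ≤ opNorm A ^ p * ‖x‖ ^ p := by
  rw [← mul_pow]
  gcongr
  exact norm_toEuclideanLin_le A x

theorem opNorm_prodRev_pow_le (p : ℕ) (f : Fin k → Mat m) :
    opNorm (prodRev f) ^ p ≤ ∏ i, opNorm (f i) ^ p := by
  rw [Finset.prod_pow]
  exact pow_le_pow_left₀ (opNorm_nonneg _) (opNorm_prodRev_le f) p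

end OpNorm

section BoundedSupport

variable {m : ℕ} {μ : Measure (Mat m)}

theorem support_subset_msupport (μ : Measure (Mat m)) : μ.support ⊆ msupport μ := by
  intro A hA ε hε
  have hopen : IsOpen {B : Mat m | opNorm (B - A) < ε} :=
    isOpen_lt (continuous_opNorm.comp (continuous_sub_right A)) continuous_const
  have hmem : opNorm (A - A) < ε := by simpa [opNorm] using hε
  exact ((μ.mem_support_iff_forall A).1 hA _ (hopen.mem_nhds hmem)).ne'

theorem HasBoundedSupport.exists_ae_opNorm_le (h : HasBoundedSupport μ) :
    ∃ C : ℝ, ∀ᵐ A ∂μ, opNorm A ≤ C := by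
  obtain ⟨C, hC⟩ := h
  refine ⟨C, ?_⟩
  filter_upwards [μ.support_mem_ae] with A hA using hC A (support_subset_msupport μ hA)

theorem HasBoundedSupport.integrable_opNorm_pow [IsFiniteMeasure μ] (h : HasBoundedSupport μ)
    (p : ℕ) : Integrable (fun A => opNorm A ^ p) μ := by
  obtain ⟨C, hC⟩ := h.exists_ae_opNorm_le
  refine .of_bound (continuous_opNorm.pow p).aestronglyMeasurable (C ^ p) ?_
  filter_upwards [hC] with A hA
  rw [Real.norm_of_nonneg (pow_nonneg (opNorm_nonneg A) p)]
  exact pow_le_pow_left₀ (opNorm_nonneg A) hA p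

end BoundedSupport

section Moments

variable {m : ℕ} {μ : Measure (Mat m)} {p : ℕ}

/-- `E[‖A_k ⋯ A₁ x‖^p]` where `A₁, …, A_k` are i.i.d. with law `μ`: the analogue of `kExpNorm` for
the trajectory started at `x`. -/
def kExpApply (μ : Measure (Mat m)) (p k : ℕ) (x : EucSp m) : ℝ :=
  ∫ f : Fin k → Mat m, ‖Matrix.toEuclideanLin (prodRev f) x‖ ^ p ∂(Measure.pi fun _ => μ)

theorem kExpNorm_nonneg (μ : Measure (Mat m)) (p k : ℕ) : 0 ≤ kExpNorm μ p k :=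
  integral_nonneg fun _ => pow_nonneg (opNorm_nonneg _) p

theorem kExpApply_nonneg (μ : Measure (Mat m)) (p k : ℕ) (x : EucSp m) :
    0 ≤ kExpApply μ p k x :=
  integral_nonneg fun _ => pow_nonneg (norm_nonneg _) p

theorem kExpApply_zero (μ : Measure (Mat m)) (p : ℕ) (x : EucSp m) :
    kExpApply μ p 0 x = ‖x‖ ^ p := by
  simp [kExpApply, prodRev_zero, measureReal_def]

theorem kExpApply_toEuclideanLin (μ : Measure (Mat m)) (p k : ℕ) (A : Mat m) (x : EucSp m) :
    kExpApply μ p k (Matrix.toEuclideanLin A x) =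
      ∫ f : Fin k → Mat m,
        ‖Matrix.toEuclideanLin (prodRev (Fin.cons A f : Fin (k + 1) → Mat m)) x‖ ^ p
          ∂(Measure.pi fun _ => μ) := by
  simp only [kExpApply, prodRev_cons, Matrix.toLpLin_mul_same, LinearMap.comp_apply]

variable [SigmaFinite μ]

theorem integrable_opNorm_prodRev_pow (hμ : Integrable (fun A => opNorm A ^ p) μ) (k : ℕ) :
    Integrable (fun f : Fin k → Mat m => opNorm (prodRev f) ^ p) (Measure.pi fun _ => μ) := by
  refine (Integrable.fintype_prod fun _ : Fin k => hμ).mono'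
    ((continuous_opNorm.comp continuous_prodRev).pow p).aestronglyMeasurable
    (ae_of_all _ fun f => ?_)
  rw [Real.norm_of_nonneg (pow_nonneg (opNorm_nonneg _) p)]
  exact opNorm_prodRev_pow_le p f

theorem integrable_norm_prodRev_apply_pow (hμ : Integrable (fun A => opNorm A ^ p) μ) (k : ℕ)
    (x : EucSp m) :
    Integrable (fun f : Fin k → Mat m => ‖Matrix.toEuclideanLin (prodRev f) x‖ ^ p)
      (Measure.pi fun _ => μ) := by
  refine ((integrable_opNorm_prodRev_pow hμ k).mul_const (‖x‖ ^ p)).mono'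
    (((continuous_toEuclideanLin_apply x).comp
      continuous_prodRev).norm.pow p).aestronglyMeasurable (ae_of_all _ fun f => ?_)
  rw [Real.norm_of_nonneg (pow_nonneg (norm_nonneg _) p)]
  exact norm_toEuclideanLin_pow_le p _ x

theorem kExpNorm_le_pow (hμ : Integrable (fun A => opNorm A ^ p) μ) (k : ℕ) :
    kExpNorm μ p k ≤ (∫ A, opNorm A ^ p ∂μ) ^ k :=
  calc kExpNorm μ p k
      ≤ ∫ f : Fin k → Mat m, ∏ i, opNorm (f i) ^ p ∂(Measure.pi fun _ => μ) :=
        integral_mono (integrable_opNorm_prodRev_pow hμ k) (.fintype_prod fun _ => hμ)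
          (opNorm_prodRev_pow_le p)
    _ = (∫ A, opNorm A ^ p ∂μ) ^ k := by
        rw [integral_fintype_prod_eq_pow (fun A => opNorm A ^ p), Fintype.card_fin]

theorem kExpApply_le (hμ : Integrable (fun A => opNorm A ^ p) μ) (k : ℕ) (x : EucSp m) :
    kExpApply μ p k x ≤ kExpNorm μ p k * ‖x‖ ^ p := by
  rw [kExpNorm, ← integral_mul_const]
  exact integral_mono (integrable_norm_prodRev_apply_pow hμ k x)
    ((integrable_opNorm_prodRev_pow hμ k).mul_const _)
    fun f => norm_toEuclideanLin_pow_le p _ x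

theorem integrable_kExpApply_toEuclideanLin (hμ : Integrable (fun A => opNorm A ^ p) μ) (k : ℕ)
    (x : EucSp m) : Integrable (fun A => kExpApply μ p k (Matrix.toEuclideanLin A x)) μ := by
  simp only [kExpApply_toEuclideanLin]
  exact integrable_integral_fin_cons (integrable_norm_prodRev_apply_pow hμ (k + 1) x)

theorem integral_kExpApply_toEuclideanLin (hμ : Integrable (fun A => opNorm A ^ p) μ) (k : ℕ)
    (x : EucSp m) :
    ∫ A, kExpApply μ p k (Matrix.toEuclideanLin A x) ∂μ = kExpApply μ p (k + 1) x := by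
  simp only [kExpApply_toEuclideanLin]
  exact integral_integral_fin_cons (integrable_norm_prodRev_apply_pow hμ (k + 1) x)

end Moments

section PRadius

variable {m : ℕ} {μ : Measure (Mat m)} [SigmaFinite μ] {p : ℕ}

theorem isBoundedUnder_kExpNorm_rpow (hμ : Integrable (fun A => opNorm A ^ p) μ) :
    IsBoundedUnder (· ≤ ·) atTop fun k : ℕ => kExpNorm μ p k ^ (1 / (p * k : ℝ)) := by
  have hM : 0 ≤ ∫ A, opNorm A ^ p ∂μ := integral_nonneg fun A => pow_nonneg (opNorm_nonneg A) p
  refine isBoundedUnder_of_eventually_le (a := (∫ A, opNorm A ^ p ∂μ) ^ (1 / p : ℝ)) ?_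
  filter_upwards [eventually_ne_atTop 0] with k hk
  have hexp : (k : ℝ) * (1 / (p * k)) = 1 / p := by field_simp
  calc kExpNorm μ p k ^ (1 / (p * k : ℝ))
      ≤ ((∫ A, opNorm A ^ p ∂μ) ^ k) ^ (1 / (p * k : ℝ)) :=
        Real.rpow_le_rpow (kExpNorm_nonneg μ p k) (kExpNorm_le_pow hμ k) (by positivity)
    _ = (∫ A, opNorm A ^ p ∂μ) ^ (1 / p : ℝ) := by rw [← Real.rpow_natCast_mul hM, hexp]

theorem pRadius_nonneg (hμ : Integrable (fun A => opNorm A ^ p) μ) : 0 ≤ pRadius μ p :=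
  le_limsup_of_frequently_le
    (Frequently.of_forall fun k => Real.rpow_nonneg (kExpNorm_nonneg μ p k) _)
    (isBoundedUnder_kExpNorm_rpow hμ)

theorem eventually_kExpNorm_le_pow_of_pRadius_lt (hμ : Integrable (fun A => opNorm A ^ p) μ)
    (hp : p ≠ 0) {γ : ℝ} (hγ : pRadius μ p < γ) :
    ∀ᶠ k : ℕ in atTop, kExpNorm μ p k ≤ γ ^ (p * k) := by
  filter_upwards [eventually_lt_of_limsup_lt hγ (isBoundedUnder_kExpNorm_rpow hμ),
    eventually_ne_atTop 0] with k hroot hk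
  have hnonneg := kExpNorm_nonneg μ p k
  calc kExpNorm μ p k = (kExpNorm μ p k ^ (1 / (p * k : ℝ))) ^ (p * k) := by
        rw [one_div, ← Nat.cast_mul, Real.rpow_inv_natCast_pow hnonneg (mul_ne_zero hp hk)]
    _ ≤ γ ^ (p * k) := pow_le_pow_left₀ (Real.rpow_nonneg hnonneg _) hroot.le _

end PRadius

section Lyapunov

variable {m : ℕ} {μ : Measure (Mat m)} {p k₀ : ℕ} {γ : ℝ}

/-- The truncated Lyapunov series `V(x) = Σ_{k < k₀} E[‖A_k ⋯ A₁ x‖^p] / γ^{pk}`. -/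
def lyapunovSum (μ : Measure (Mat m)) (p : ℕ) (γ : ℝ) (k₀ : ℕ) (x : EucSp m) : ℝ :=
  ∑ k ∈ Finset.range k₀, kExpApply μ p k x / γ ^ (p * k)

theorem norm_pow_le_lyapunovSum (μ : Measure (Mat m)) (p : ℕ) (hγ : 0 ≤ γ) (hk₀ : k₀ ≠ 0)
    (x : EucSp m) : ‖x‖ ^ p ≤ lyapunovSum μ p γ k₀ x :=
  calc ‖x‖ ^ p = kExpApply μ p 0 x / γ ^ (p * 0) := by simp [kExpApply_zero]
    _ ≤ lyapunovSum μ p γ k₀ x :=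
      Finset.single_le_sum (f := fun k => kExpApply μ p k x / γ ^ (p * k))
        (fun k _ => div_nonneg (kExpApply_nonneg μ p k x) (pow_nonneg hγ _))
        (Finset.mem_range.2 hk₀.bot_lt)

variable [SigmaFinite μ]

theorem lyapunovSum_le (hμ : Integrable (fun A => opNorm A ^ p) μ) (hγ : 0 ≤ γ) (k₀ : ℕ)
    (x : EucSp m) :
    lyapunovSum μ p γ k₀ x ≤
      (∑ k ∈ Finset.range k₀, kExpNorm μ p k / γ ^ (p * k)) * ‖x‖ ^ p := by
  simp only [lyapunovSum, Finset.sum_mul, div_mul_eq_mul_div]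
  gcongr with k
  exact kExpApply_le hμ k x

theorem integral_lyapunovSum_toEuclideanLin (hμ : Integrable (fun A => opNorm A ^ p) μ)
    (hγ : γ ≠ 0) (k₀ : ℕ) (x : EucSp m) :
    ∫ A, lyapunovSum μ p γ k₀ (Matrix.toEuclideanLin A x) ∂μ =
      γ ^ p * (lyapunovSum μ p γ k₀ x + kExpApply μ p k₀ x / γ ^ (p * k₀) - ‖x‖ ^ p) := by
  have hshift (k : ℕ) : ∫ A, kExpApply μ p k (Matrix.toEuclideanLin A x) / γ ^ (p * k) ∂μ =
      γ ^ p * (kExpApply μ p (k + 1) x / γ ^ (p * (k + 1))) := by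
    rw [integral_div, integral_kExpApply_toEuclideanLin hμ, mul_add_one, pow_add]
    field_simp
  calc ∫ A, lyapunovSum μ p γ k₀ (Matrix.toEuclideanLin A x) ∂μ
      = γ ^ p * ∑ k ∈ Finset.range k₀, kExpApply μ p (k + 1) x / γ ^ (p * (k + 1)) := by
        simp only [lyapunovSum]
        rw [integral_finsetSum _ fun k _ =>
          (integrable_kExpApply_toEuclideanLin hμ k x).div_const _, Finset.mul_sum]
        exact Finset.sum_congr rfl fun k _ => hshift k
    _ = γ ^ p * (lyapunovSum μ p γ (k₀ + 1) x - ‖x‖ ^ p) := by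
        simp [lyapunovSum, Finset.sum_range_succ' _ k₀, kExpApply_zero]
    _ = γ ^ p * (lyapunovSum μ p γ k₀ x + kExpApply μ p k₀ x / γ ^ (p * k₀) - ‖x‖ ^ p) := by
        rw [lyapunovSum, Finset.sum_range_succ, lyapunovSum]

theorem integral_lyapunovSum_toEuclideanLin_le (hμ : Integrable (fun A => opNorm A ^ p) μ)
    (hγ : 0 < γ) (hdecay : kExpNorm μ p k₀ ≤ γ ^ (p * k₀)) (x : EucSp m) :
    ∫ A, lyapunovSum μ p γ k₀ (Matrix.toEuclideanLin A x) ∂μ ≤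
      γ ^ p * lyapunovSum μ p γ k₀ x := by
  have hlast : kExpApply μ p k₀ x / γ ^ (p * k₀) ≤ ‖x‖ ^ p := by
    rw [div_le_iff₀' (by positivity)]
    exact (kExpApply_le hμ k₀ x).trans (by gcongr)
  rw [integral_lyapunovSum_toEuclideanLin hμ hγ.ne']
  gcongr
  linarith

theorem isStochLyap_lyapunovSum (hμ : Integrable (fun A => opNorm A ^ p) μ) (hγ : 0 < γ)
    (hk₀ : k₀ ≠ 0) (hdecay : kExpNorm μ p k₀ ≤ γ ^ (p * k₀)) :
    IsStochLyap μ p γ (lyapunovSum μ p γ k₀) := by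
  have hC : 0 ≤ ∑ k ∈ Finset.range k₀, kExpNorm μ p k / γ ^ (p * k) :=
    Finset.sum_nonneg fun k _ => div_nonneg (kExpNorm_nonneg μ p k) (by positivity)
  refine ⟨⟨1, one_pos, _, add_pos_of_nonneg_of_pos hC one_pos, fun x => ⟨?_, ?_⟩⟩,
    integral_lyapunovSum_toEuclideanLin_le hμ hγ hdecay⟩
  · rw [one_mul]
    exact norm_pow_le_lyapunovSum μ p hγ.le hk₀ x
  · refine (lyapunovSum_le hμ hγ.le k₀ x).trans ?_
    gcongr
    exact le_add_of_nonneg_right zero_le_one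

end Lyapunov

theorem stmt16_general {m : ℕ} {μ : Measure (Mat m)} [SigmaFinite μ] {p : ℕ} (hp : p ≠ 0)
    (hμ : Integrable (fun A => opNorm A ^ p) μ) {γ : ℝ} (hγ : pRadius μ p < γ) :
    ∃ k₀ : ℕ, 0 < k₀ ∧ IsStochLyap μ p γ (lyapunovSum μ p γ k₀) := by
  have hγ0 : 0 < γ := (pRadius_nonneg hμ).trans_lt hγ
  obtain ⟨k₀, hdecay, hk₀⟩ :=
    ((eventually_kExpNorm_le_pow_of_pRadius_lt hμ hp hγ).and (eventually_gt_atTop 0)).exists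
  exact ⟨k₀, hk₀, isStochLyap_lyapunovSum hμ hγ0 hk₀.ne' hdecay⟩

/-- If `Σ_μ` is exponentially stable in `p`th mean (equivalently `ρ_{p,μ} < 1`),
then for every `γ ∈ (ρ_{p,μ}, 1)` the function
`V(x) = Σ_{k=0}^{k₀−1} E[‖A_k⋯A₁x‖^p]/γ^{pk}` (for a suitable `k₀ ≥ 1`, empty product being
the identity) is a stochastic Lyapunov function for `μ` of degree `p` with growth rate `γ`. -/
theorem stmt16 (n : ℕ) (hn : 1 ≤ n) (μ : Measure (Mat n)) [IsProbabilityMeasure μ]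
    (hbdd : HasBoundedSupport μ) (p : ℕ) (hp : 1 ≤ p)
    (hstab : pRadius μ p < 1) (γ : ℝ) (hγl : pRadius μ p < γ) (hγ1 : γ < 1) :
    ∃ k₀ : ℕ, 0 < k₀ ∧ IsStochLyap μ p γ (fun x : EucSp n =>
      ∑ k ∈ Finset.range k₀,
        (∫ f : Fin k → Mat n, ‖Matrix.toEuclideanLin (prodRev f) x‖ ^ p
            ∂(Measure.pi fun _ => μ)) / γ ^ (p * k)) := by
  exact stmt16_general (Nat.one_le_iff_ne_zero.1 hp) (hbdd.integrable_opNorm_pow p) hγl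

end
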